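/- arXiv:2002.11809 — 2 statements merged into one kernel-verified Lean document; each statement's English description precedes it below -/
import Mathlib

section
/- For any μ ∈ (0,∞) and any probability measure P on ℤ_+ × [0,1] with 0 < P_{10}, P_{21} < ∞ and P_{32}, P_{43} < ∞, the random variables (D*_1, D*_2) = (1 + D_1 + D'_1, 1 + D_2 + D'_2) satisfy Cor(D*_1, D*_2) = [P_{21}(P_{43} + P_{33}) − P_{32}²] / [P_{21}(P_{43} + P_{32}) − P_{32}² + μ P_{21}² (P_{21} + P_{32})]. -/
open MeasureTheory ProbabilityTheory Filter
open scoped ENNReal Topology Classical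

noncomputable section

/-- The binomial probability mass function `Bin(x,y)(s)`. -/
def binP (x : ℕ) (y : ℝ) (s : ℕ) : ℝ := (x.choose s : ℝ) * y ^ s * (1 - y) ^ (x - s)

/-- Convolution of (mass) functions on `ℕ`. -/
def conv (f g : ℕ → ℝ) (s : ℕ) : ℝ := ∑ i ∈ Finset.range (s + 1), f i * g (s - i)

/-- Iterated convolution power: `convPow f j` is the `j`-fold convolution of `f`. -/
def convPow (f : ℕ → ℝ) : ℕ → ℕ → ℝ
  | 0 => fun s => if s = 0 then 1 else 0
  | j + 1 => conv f (convPow f j)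

/-- The compound Poisson probability mass function `CPoi(lam, f)`, i.e. the law of
`H_1 + ⋯ + H_Λ` where `Λ ~ Poi(lam)` and the `H_k` are i.i.d. with mass function `f`,
independent of `Λ`. -/
def cpoi (lam : ℝ) (f : ℕ → ℝ) (s : ℕ) : ℝ :=
  ∑' j : ℕ, Real.exp (-lam) * lam ^ j / (j.factorial : ℝ) * convPow f j s

/-- Convolution of (mass) functions on `ℕ × ℕ`. -/
def conv2 (F G : ℕ → ℕ → ℝ) (s t : ℕ) : ℝ :=
  ∑ i ∈ Finset.range (s + 1), ∑ j ∈ Finset.range (t + 1), F i j * G (s - i) (t - j)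

/-- Point mass at `(1,1)`, as a mass function on `ℕ × ℕ`. -/
def delta11 (s t : ℕ) : ℝ := if s = 1 ∧ t = 1 then 1 else 0

/-- The cross moment `Q_{rs} = E[(X)_r Y^s]` of a layer type distribution `Q`,
where `(x)_r` is the falling factorial. -/
def mom (Q : Measure (ℕ × ℝ)) (r s : ℕ) : ℝ :=
  ∫ p, (p.1.descFactorial r : ℝ) * p.2 ^ s ∂Q

/-- The increment distribution `g(s) = ∫ Bin(x-1,y)(s) x P(dx,dy) / P₁₀`. -/
def gInc (P : Measure (ℕ × ℝ)) (s : ℕ) : ℝ :=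
  (∫ p, (p.1 : ℝ) * binP (p.1 - 1) p.2 s ∂P) / mom P 1 0

/-- The limiting degree distribution `\bar f_1 = CPoi(μ P₁₀, g)`. -/
def barf1 (mu : ℝ) (P : Measure (ℕ × ℝ)) (s : ℕ) : ℝ :=
  cpoi (mu * mom P 1 0) (gInc P) s

/-- The distribution `f₂'` of `(D₁', D₂')`:
`f₂'(s,t) = ∫ Bin(x-2,y)(s) Bin(x-2,y)(t) (x)₂ y P(dx,dy) / P₂₁`. -/
def f2p (P : Measure (ℕ × ℝ)) (s t : ℕ) : ℝ :=
  (∫ p, (p.1.descFactorial 2 : ℝ) * p.2 * binP (p.1 - 2) p.2 s * binP (p.1 - 2) p.2 t ∂P) /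
    mom P 2 1

/-- The limiting bidegree distribution `\bar f₂ = δ₍₁,₁₎ ∗ (\bar f₁ ⊗ \bar f₁) ∗ f₂'`. -/
def barf2 (mu : ℝ) (P : Measure (ℕ × ℝ)) : ℕ → ℕ → ℝ :=
  conv2 (conv2 delta11 fun s t => barf1 mu P s * barf1 mu P t) (f2p P)

/-- Expectation of `φ(U⁽¹⁾,U⁽²⁾)` where `(U⁽¹⁾,U⁽²⁾)` has mass function `F` on `ℕ²`. -/
def pmean (F : ℕ → ℕ → ℝ) (φ : ℕ → ℕ → ℝ) : ℝ :=
  ∑' u : ℕ × ℕ, φ u.1 u.2 * F u.1 u.2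

/-- Pearson correlation coefficient of a mass function `F` on `ℕ²`. -/
def pearson (F : ℕ → ℕ → ℝ) : ℝ :=
  (pmean F (fun s t => (s : ℝ) * t) - pmean F (fun s _ => (s : ℝ)) * pmean F (fun _ t => (t : ℝ))) /
    (Real.sqrt (pmean F (fun s _ => (s : ℝ) ^ 2) - pmean F (fun s _ => (s : ℝ)) ^ 2) *
      Real.sqrt (pmean F (fun _ t => (t : ℝ) ^ 2) - pmean F (fun _ t => (t : ℝ)) ^ 2))

/-!
Write `D* = (1, 1) + (D₁, D₂) + (D₁', D₂')`. Covariances of additive statistics add over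
independent summands, so the numerator of the correlation is `Cov(D₁', D₂')` and each variance in
the denominator is `Var D₁ + Var D₁'`. The laws `g` and `f₂'` are mixtures of binomials over a
random layer with weight `(x)_r y^s`, and the compound Poisson law is a mixture of convolution
powers over a Poisson count. The law of total covariance then gives all the moments: since
`(x)_r (x - r) = (x)_{r+1}`, conditional binomial means shift the layer weight from `(r, s)` to
`(r + 1, s + 1)`, while factorial moments of a Poisson variable are powers of its mean.
-/

section Covariance

variable {A B : Type*}

/-- `f` is a probability mass function on `A` under which the statistics `X` and `Y` have means `a`
and `b` and covariance `c`. The second moment is recorded as `E[XY] = c + ab`, so that the moments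
are genuine (all series converge) and the variance is the case `X = Y`. -/
structure HasCov (f X Y : A → ℝ) (a b c : ℝ) : Prop where
  nonneg : ∀ u, 0 ≤ f u
  hasSum_one : HasSum f 1
  hasSum_left : HasSum (fun u => X u * f u) a
  hasSum_right : HasSum (fun u => Y u * f u) b
  hasSum_mul : HasSum (fun u => X u * Y u * f u) (c + a * b)

lemma hasSum_mul_prod {f : A → ℝ} {g : B → ℝ} {a b : ℝ} (hf : HasSum f a) (hg : HasSum g b) :
    HasSum (fun p : A × B => f p.1 * g p.2) (a * b) :=
  hf.mul hg (summable_mul_of_summable_norm hf.summable.norm hg.summable.norm)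

namespace HasCov

variable {f X Y : A → ℝ} {g X' Y' : B → ℝ} {a b c a' b' c' : ℝ}

lemma symm (h : HasCov f X Y a b c) : HasCov f Y X b a c where
  nonneg := h.nonneg
  hasSum_one := h.hasSum_one
  hasSum_left := h.hasSum_right
  hasSum_right := h.hasSum_left
  hasSum_mul := by simpa only [mul_comm] using h.hasSum_mul

lemma zero_right (h : HasCov f X Y a b c) : HasCov f X (fun _ => 0) a 0 0 where
  nonneg := h.nonneg
  hasSum_one := h.hasSum_one
  hasSum_left := h.hasSum_left
  hasSum_right := by simpa only [zero_mul] using hasSum_zero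
  hasSum_mul := by simpa only [mul_zero, zero_mul, add_zero] using hasSum_zero

lemma variance_nonneg (h : HasCov f X X a a c) : 0 ≤ c := by
  have hsq : HasSum (fun u => (X u - a) ^ 2 * f u) c := by
    convert (h.hasSum_mul.add (h.hasSum_left.mul_left (-2 * a))).add
      (h.hasSum_one.mul_left (a ^ 2)) using 1
    · funext u; ring
    · ring
  exact hsq.nonneg fun u => mul_nonneg (sq_nonneg _) (h.nonneg u)

lemma pi_single [DecidableEq A] (u₀ : A) (X Y : A → ℝ) :
    HasCov (Pi.single u₀ 1) X Y (X u₀) (Y u₀) 0 := by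
  have expectation (φ : A → ℝ) :
      HasSum (fun u => φ u * (Pi.single u₀ 1 : A → ℝ) u) (φ u₀) := by
    simpa using hasSum_single (f := fun u => φ u * (Pi.single u₀ 1 : A → ℝ) u) u₀
      fun u hu => by simp [hu]
  refine ⟨fun u => ?_, ?_, expectation X, expectation Y, ?_⟩
  · exact (Pi.single_nonneg.2 zero_le_one : (0 : A → ℝ) ≤ Pi.single u₀ 1) u
  · simpa using expectation fun _ => 1
  · simpa using expectation fun u => X u * Y u

lemma prod (hf : HasCov f X Y a b c) (hg : HasCov g X' Y' a' b' c') :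
    HasCov (fun p : A × B => f p.1 * g p.2) (fun p => X p.1 + X' p.2) (fun p => Y p.1 + Y' p.2)
      (a + a') (b + b') (c + c') where
  nonneg p := mul_nonneg (hf.nonneg _) (hg.nonneg _)
  hasSum_one := by simpa only [mul_one] using hasSum_mul_prod hf.hasSum_one hg.hasSum_one
  hasSum_left := by
    convert (hasSum_mul_prod hf.hasSum_left hg.hasSum_one).add
      (hasSum_mul_prod hf.hasSum_one hg.hasSum_left) using 1
    · funext p; ring
    · ring
  hasSum_right := by
    convert (hasSum_mul_prod hf.hasSum_right hg.hasSum_one).add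
      (hasSum_mul_prod hf.hasSum_one hg.hasSum_right) using 1
    · funext p; ring
    · ring
  hasSum_mul := by
    convert ((hasSum_mul_prod hf.hasSum_mul hg.hasSum_one).add
      (hasSum_mul_prod hf.hasSum_left hg.hasSum_right)).add
      ((hasSum_mul_prod hf.hasSum_right hg.hasSum_left).add
      (hasSum_mul_prod hf.hasSum_one hg.hasSum_mul)) using 1
    · funext p; ring
    · ring

lemma prod_fst_fst (hf : HasCov f X Y a b c) (hg : HasCov g X' Y' a' b' c') :
    HasCov (fun p : A × B => f p.1 * g p.2) (fun p => X p.1) (fun p => Y p.1) a b c := by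
  simpa only [add_zero] using hf.prod hg.zero_right.symm.zero_right

lemma prod_snd_snd (hf : HasCov f X Y a b c) (hg : HasCov g X' Y' a' b' c') :
    HasCov (fun p : A × B => f p.1 * g p.2) (fun p => X' p.2) (fun p => Y' p.2) a' b' c' := by
  simpa only [zero_add] using hf.zero_right.symm.zero_right.prod hg

lemma prod_fst_snd (hf : HasCov f X Y a b c) (hg : HasCov g X' Y' a' b' c') :
    HasCov (fun p : A × B => f p.1 * g p.2) (fun p => X p.1) (fun p => Y' p.2) a b' 0 := by
  simpa only [add_zero, zero_add] using hf.zero_right.prod hg.symm.zero_right.symm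

end HasCov

end Covariance

section Convolution

open Finset.HasAntidiagonal (antidiagonal)

variable {A B : Type*} [AddMonoid A] [AddMonoid B]
  [Finset.HasAntidiagonal A] [Finset.HasAntidiagonal B]

/-- Antidiagonals in a product monoid, computed coordinatewise; they turn `conv2` into the
convolution of mass functions on the additive monoid `ℕ × ℕ`. -/
instance prodHasAntidiagonal : Finset.HasAntidiagonal (A × B) where
  antidiagonal u :=
    (antidiagonal u.1 ×ˢ antidiagonal u.2).map (Equiv.prodProdProdComm A A B B).toEmbedding
  mem_antidiagonal := by
    rintro ⟨a, b⟩ ⟨⟨a₁, b₁⟩, ⟨a₂, b₂⟩⟩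
    simp [Equiv.prodProdProdComm, Prod.ext_iff]

lemma sum_antidiagonal_prod (u : A × B) (h : (A × B) × (A × B) → ℝ) :
    ∑ p ∈ antidiagonal u, h p =
      ∑ p ∈ antidiagonal u.1, ∑ q ∈ antidiagonal u.2, h ((p.1, q.1), (p.2, q.2)) := by
  rw [← Finset.sum_product']
  exact Finset.sum_map _ _ _

lemma hasSum_mul_sum_antidiagonal {φ : A → ℝ} {h : A × A → ℝ} {m : ℝ}
    (hm : HasSum (fun p => φ (p.1 + p.2) * h p) m) :
    HasSum (fun u => φ u * ∑ p ∈ antidiagonal u, h p) m := by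
  refine (Finset.HasAntidiagonal.sigmaAntidiagonalEquivProd.hasSum_iff.2 hm).sigma fun u => ?_
  have hfiber (p : antidiagonal u) : φ (p.1.1 + p.1.2) * h p = φ u * h p := by
    rw [Finset.HasAntidiagonal.mem_antidiagonal.1 p.2]
  rw [Finset.mul_sum]
  exact ((antidiagonal u).hasSum fun p => φ u * h p).congr_fun hfiber

namespace HasCov

variable {f g X Y : A → ℝ} {a b c a' b' c' : ℝ}

lemma sum_antidiagonal (hX : ∀ u v, X (u + v) = X u + X v) (hY : ∀ u v, Y (u + v) = Y u + Y v)
    (hf : HasCov f X Y a b c) (hg : HasCov g X Y a' b' c') :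
    HasCov (fun u => ∑ p ∈ antidiagonal u, f p.1 * g p.2) X Y (a + a') (b + b') (c + c') where
  nonneg u := Finset.sum_nonneg fun p _ => mul_nonneg (hf.nonneg _) (hg.nonneg _)
  hasSum_one := by
    simpa only [one_mul] using hasSum_mul_sum_antidiagonal (φ := fun _ => 1)
      (by simpa only [one_mul] using (hf.prod hg).hasSum_one)
  hasSum_left := hasSum_mul_sum_antidiagonal (by simpa only [hX] using (hf.prod hg).hasSum_left)
  hasSum_right := hasSum_mul_sum_antidiagonal (by simpa only [hY] using (hf.prod hg).hasSum_right)
  hasSum_mul := hasSum_mul_sum_antidiagonal (φ := fun u => X u * Y u)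
    (by simpa only [hX, hY] using (hf.prod hg).hasSum_mul)

end HasCov

lemma conv_eq_sum_antidiagonal (f g : ℕ → ℝ) :
    conv f g = fun s => ∑ p ∈ antidiagonal s, f p.1 * g p.2 := by
  funext s
  exact (Finset.Nat.sum_antidiagonal_eq_sum_range_succ (fun i j => f i * g j) s).symm

lemma conv2_eq_sum_antidiagonal (F G : ℕ → ℕ → ℝ) :
    (fun u : ℕ × ℕ => conv2 F G u.1 u.2) =
      fun u => ∑ p ∈ antidiagonal u, F p.1.1 p.1.2 * G p.2.1 p.2.2 := by
  funext u
  simp only [conv2, sum_antidiagonal_prod, Finset.Nat.sum_antidiagonal_eq_sum_range_succ_mk]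

/-- `f` is a probability mass function on `ℕ` with mean `m` and variance `v`. -/
abbrev HasMeanVar (f : ℕ → ℝ) (m v : ℝ) : Prop := HasCov f Nat.cast Nat.cast m m v

lemma hasMeanVar_conv {f g : ℕ → ℝ} {m v m' v' : ℝ} (hf : HasMeanVar f m v)
    (hg : HasMeanVar g m' v') : HasMeanVar (conv f g) (m + m') (v + v') := by
  rw [conv_eq_sum_antidiagonal]
  exact hf.sum_antidiagonal Nat.cast_add Nat.cast_add hg

lemma hasMeanVar_convPow {f : ℕ → ℝ} {m v : ℝ} (hf : HasMeanVar f m v) (j : ℕ) :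
    HasMeanVar (convPow f j) (j * m) (j * v) := by
  induction j with
  | zero =>
    have hzero : convPow f 0 = Pi.single 0 1 := by
      funext s; simp [convPow, Pi.single_apply]
    simpa [hzero] using HasCov.pi_single 0 (Nat.cast : ℕ → ℝ) Nat.cast
  | succ j ih =>
    rw [show ((j + 1 : ℕ) : ℝ) * m = m + j * m by push_cast; ring,
      show ((j + 1 : ℕ) : ℝ) * v = v + j * v by push_cast; ring]
    exact hasMeanVar_conv hf ih

lemma hasCov_conv2 {F G : ℕ → ℕ → ℝ} {X Y : ℕ × ℕ → ℝ} {a b c a' b' c' : ℝ}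
    (hX : ∀ u v, X (u + v) = X u + X v) (hY : ∀ u v, Y (u + v) = Y u + Y v)
    (hF : HasCov (fun u => F u.1 u.2) X Y a b c) (hG : HasCov (fun u => G u.1 u.2) X Y a' b' c') :
    HasCov (fun u => conv2 F G u.1 u.2) X Y (a + a') (b + b') (c + c') := by
  rw [conv2_eq_sum_antidiagonal]
  exact hF.sum_antidiagonal hX hY hG

end Convolution

section Mixture

variable {Ω A : Type*} [MeasurableSpace Ω] {ν : Measure Ω}

lemma hasSum_integral_of_nonneg [Countable A] {F : A → Ω → ℝ} {h : Ω → ℝ}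
    (hF : ∀ u, AEStronglyMeasurable (F u) ν) (hF0 : ∀ᵐ p ∂ν, ∀ u, 0 ≤ F u p)
    (hsum : ∀ᵐ p ∂ν, HasSum (fun u => F u p) (h p)) (hh : Integrable h ν) :
    HasSum (fun u => ∫ p, F u p ∂ν) (∫ p, h p ∂ν) := by
  refine hasSum_integral_of_dominated_convergence F hF (fun u => ?_)
    (hsum.mono fun p hp => hp.summable) (hh.congr ?_) hsum
  · filter_upwards [hF0] with p hp using (Real.norm_of_nonneg (hp u)).le
  · filter_upwards [hsum] with p hp using hp.tsum_eq.symm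

/-- The mixture of the mass functions `κ p` with respect to the probability measure
proportional to `w p ν(dp)`. -/
def mixture (ν : Measure Ω) (w : Ω → ℝ) (κ : Ω → A → ℝ) (u : A) : ℝ :=
  (∫ p, w p * κ p u ∂ν) / ∫ p, w p ∂ν

lemma hasCov_mixture [Countable A] {w a b c : Ω → ℝ} {κ : Ω → A → ℝ} {X Y : A → ℝ}
    (hX : ∀ u, 0 ≤ X u) (hY : ∀ u, 0 ≤ Y u) (hκm : ∀ u, Measurable fun p => κ p u)
    (hκ : ∀ᵐ p ∂ν, HasCov (κ p) X Y (a p) (b p) (c p))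
    (hw0 : ∀ᵐ p ∂ν, 0 ≤ w p) (hwpos : 0 < ∫ p, w p ∂ν) (hw : Integrable w ν)
    (ha : Integrable (fun p => w p * a p) ν) (hb : Integrable (fun p => w p * b p) ν)
    (hc : Integrable (fun p => w p * (c p + a p * b p)) ν) :
    HasCov (mixture ν w κ) X Y ((∫ p, w p * a p ∂ν) / ∫ p, w p ∂ν)
      ((∫ p, w p * b p ∂ν) / ∫ p, w p ∂ν)
      ((∫ p, w p * (c p + a p * b p) ∂ν) / (∫ p, w p ∂ν) -
        (∫ p, w p * a p ∂ν) / (∫ p, w p ∂ν) * ((∫ p, w p * b p ∂ν) / ∫ p, w p ∂ν)) := by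
  have expectation (φ : A → ℝ) (m : Ω → ℝ) (hφ : ∀ u, 0 ≤ φ u)
      (hm : ∀ᵐ p ∂ν, HasSum (fun u => φ u * κ p u) (m p))
      (hint : Integrable (fun p => w p * m p) ν) :
      HasSum (fun u => φ u * mixture ν w κ u)
        ((∫ p, w p * m p ∂ν) / ∫ p, w p ∂ν) := by
    have hsum : HasSum (fun u => ∫ p, w p * (φ u * κ p u) ∂ν) (∫ p, w p * m p ∂ν) := by
      refine hasSum_integral_of_nonneg (fun u => ?_) ?_ (hm.mono fun p hp => hp.mul_left _) hint
      · exact hw.aestronglyMeasurable.mul ((hκm u).const_mul _).aestronglyMeasurable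
      · filter_upwards [hκ, hw0] with p hp hwp u
        exact mul_nonneg hwp (mul_nonneg (hφ u) (hp.nonneg u))
    have hmixture (u : A) :
        φ u * mixture ν w κ u = (∫ p, w p * (φ u * κ p u) ∂ν) / ∫ p, w p ∂ν := by
      simp only [mixture, ← mul_div_assoc, ← integral_const_mul, mul_left_comm]
    simpa only [hmixture] using hsum.div_const _
  refine ⟨fun u => div_nonneg (integral_nonneg_of_ae ?_) hwpos.le, ?_,
    expectation X a hX (hκ.mono fun p hp => hp.hasSum_left) ha,
    expectation Y b hY (hκ.mono fun p hp => hp.hasSum_right) hb, ?_⟩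
  · filter_upwards [hκ, hw0] with p hp hwp using mul_nonneg hwp (hp.nonneg u)
  · simpa [hwpos.ne'] using expectation (fun _ => 1) (fun _ => 1) (fun _ => zero_le_one)
      (hκ.mono fun p hp => by simpa only [one_mul] using hp.hasSum_one) (by simpa using hw)
  · rw [sub_add_cancel]
    exact expectation (fun u => X u * Y u) _ (fun u => mul_nonneg (hX u) (hY u))
      (hκ.mono fun p hp => hp.hasSum_mul) hc

end Mixture

section CompoundPoisson

lemma hasSum_poisson_descFactorial (r : NNReal) (k : ℕ) :
    HasSum (fun n : ℕ => Real.exp (-r) * r ^ n / n.factorial * (n.descFactorial k : ℝ))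
      ((r : ℝ) ^ k) := by
  rw [← hasSum_nat_add_iff' k, Finset.sum_eq_zero fun n hn => by
    simp [Nat.descFactorial_of_lt (Finset.mem_range.1 hn)], sub_zero]
  have hshift (n : ℕ) : Real.exp (-r) * r ^ (n + k) / (n + k).factorial *
      ((n + k).descFactorial k : ℝ) = r ^ k * (Real.exp (-r) * r ^ n / n.factorial) := by
    have hfact : ((n + k).factorial : ℝ) = n.factorial * (n + k).descFactorial k := by
      have := Nat.factorial_mul_descFactorial (Nat.le_add_left k n)
      rw [Nat.add_sub_cancel] at this
      exact_mod_cast this.symm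
    have hdesc : ((n + k).descFactorial k : ℝ) ≠ 0 := by
      simp [Nat.descFactorial_eq_zero_iff_lt]
    rw [hfact]
    field_simp
    ring
  simpa only [hshift, mul_one] using (hasSum_one_poissonMeasure r).mul_left ((r : ℝ) ^ k)

lemma integrable_poissonMeasure_descFactorial (r : NNReal) (k : ℕ) :
    Integrable (fun n : ℕ => (n.descFactorial k : ℝ)) (poissonMeasure r) :=
  integrable_poissonMeasure_iff.2 <| by
    simpa only [Real.norm_natCast] using (hasSum_poisson_descFactorial r k).summable

lemma integral_poissonMeasure_descFactorial (r : NNReal) (k : ℕ) :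
    ∫ n, (n.descFactorial k : ℝ) ∂poissonMeasure r = (r : ℝ) ^ k := by
  simpa only [integral_poissonMeasure, smul_eq_mul] using
    (hasSum_poisson_descFactorial r k).tsum_eq

lemma cpoi_eq_mixture (r : NNReal) (f : ℕ → ℝ) :
    cpoi r f = mixture (poissonMeasure r) (fun _ => 1) (convPow f) := by
  funext s
  simp [cpoi, mixture, integral_poissonMeasure]

lemma hasMeanVar_cpoi {f : ℕ → ℝ} {m v r : ℝ} (hr : 0 ≤ r) (hf : HasMeanVar f m v) :
    HasMeanVar (cpoi r f) (r * m) (r * (v + m ^ 2)) := by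
  lift r to NNReal using hr
  have hmean : (fun j : ℕ => (1 : ℝ) * (j * m)) = fun j => m * (j.descFactorial 1 : ℝ) := by
    funext j; simp [mul_comm]
  have hsecond : (fun j : ℕ => (1 : ℝ) * (j * v + j * m * (j * m))) = fun j =>
      m ^ 2 * (j.descFactorial 2 : ℝ) + (v + m ^ 2) * (j.descFactorial 1 : ℝ) := by
    funext j
    rcases j with _ | j
    · simp
    · simp [Nat.descFactorial]; ring
  have hint (k : ℕ) (x : ℝ) := (integrable_poissonMeasure_descFactorial r k).const_mul x
  have hmix := hasCov_mixture (ν := poissonMeasure r) (w := fun _ => 1)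
    (fun s : ℕ => s.cast_nonneg) (fun s : ℕ => s.cast_nonneg) (fun _ => Measurable.of_discrete)
    (.of_forall (hasMeanVar_convPow hf)) (by simp) (by simp) (integrable_const _) (hmean ▸ hint 1 _)
    (hmean ▸ hint 1 _) (hsecond ▸ (hint 2 _).add (hint 1 _))
  have hone : ∫ _ : ℕ, (1 : ℝ) ∂poissonMeasure r = 1 := by simp
  simp only [hmean, hsecond, hone, integral_add (hint 2 _) (hint 1 _), integral_const_mul,
    integral_poissonMeasure_descFactorial, pow_one, div_one] at hmix
  rw [cpoi_eq_mixture]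
  convert hmix using 1 <;> ring

end CompoundPoisson

section Binomial

lemma cast_mul_cast_pred (n : ℕ) : (n : ℝ) * ((n - 1 : ℕ) : ℝ) = n * n - n := by
  rcases n with _ | n
  · simp
  · push_cast [Nat.add_sub_cancel]; ring

lemma binP_eq_eval_bernsteinPolynomial (n : ℕ) (y : ℝ) (s : ℕ) :
    binP n y s = (bernsteinPolynomial ℝ n s).eval y := by
  simp [binP, bernsteinPolynomial]

lemma hasMeanVar_binP (n : ℕ) {y : ℝ} (hy : y ∈ Set.Icc (0 : ℝ) 1) :
    HasMeanVar (binP n y) (n * y) (n * (y - y ^ 2)) := by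
  have expectation (φ : ℕ → ℝ) : HasSum (fun s => φ s * binP n y s)
      (∑ s ∈ Finset.range (n + 1), φ s * binP n y s) := by
    refine hasSum_sum_of_ne_finset_zero fun s hs => ?_
    have hns : n < s := by simpa using hs
    simp [binP, Nat.choose_eq_zero_of_lt hns]
  have hmass : ∑ s ∈ Finset.range (n + 1), binP n y s = 1 := by
    simpa [Polynomial.eval_finsetSum, ← binP_eq_eval_bernsteinPolynomial] using
      congrArg (Polynomial.eval y) (bernsteinPolynomial.sum ℝ n)
  have hmean : ∑ s ∈ Finset.range (n + 1), (s : ℝ) * binP n y s = n * y := by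
    simpa [Polynomial.eval_finsetSum, ← binP_eq_eval_bernsteinPolynomial] using
      congrArg (Polynomial.eval y) (bernsteinPolynomial.sum_smul ℝ n)
  have hfactorial : ∑ s ∈ Finset.range (n + 1), ((s : ℝ) * s - s) * binP n y s
      = (n * n - n) * y ^ 2 := by
    simpa [Polynomial.eval_finsetSum, ← binP_eq_eval_bernsteinPolynomial, cast_mul_cast_pred] using
      congrArg (Polynomial.eval y) (bernsteinPolynomial.sum_mul_smul ℝ n)
  have hsecond : ∑ s ∈ Finset.range (n + 1), (s : ℝ) * s * binP n y s
      = n * (y - y ^ 2) + n * y * (n * y) := by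
    simp only [sub_mul, Finset.sum_sub_distrib] at hfactorial
    linear_combination hfactorial + hmean
  refine ⟨fun s => ?_, ?_, hmean ▸ expectation _, hmean ▸ expectation _, hsecond ▸ expectation _⟩
  · have := sub_nonneg.2 hy.2
    have := hy.1
    unfold binP
    positivity
  · simpa [hmass] using expectation fun _ => 1

end Binomial

section Layers

/-- The weight of a layer of size `x` and strength `y` whose `P`-integral is `P_{rs}`. -/
def layerWeight (r s : ℕ) (p : ℕ × ℝ) : ℝ := (p.1.descFactorial r : ℝ) * p.2 ^ s

variable {P : Measure (ℕ × ℝ)} {A : Type*}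

lemma mom_eq_integral_layerWeight (r s : ℕ) : mom P r s = ∫ p, layerWeight r s p ∂P := rfl

lemma layerWeight_nonneg (r s : ℕ) {p : ℕ × ℝ} (hp : 0 ≤ p.2) : 0 ≤ layerWeight r s p := by
  unfold layerWeight; positivity

lemma integrable_layerWeight_of_le (hP : ∀ᵐ p ∂P, p.2 ∈ Set.Icc (0 : ℝ) 1) {r s t : ℕ}
    (hst : s ≤ t) (hint : Integrable (layerWeight r s) P) : Integrable (layerWeight r t) P := by
  refine hint.mono' (by unfold layerWeight; fun_prop) ?_
  filter_upwards [hP] with p ⟨hy0, hy1⟩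
  rw [Real.norm_of_nonneg (layerWeight_nonneg r t hy0)]
  exact mul_le_mul_of_nonneg_left (pow_le_pow_of_le_one hy0 hy1 hst) (Nat.cast_nonneg _)

lemma layerWeight_mul_sub (r s : ℕ) (p : ℕ × ℝ) :
    layerWeight r s p * ((p.1 - r : ℕ) * p.2) = layerWeight (r + 1) (s + 1) p := by
  rw [layerWeight, layerWeight, Nat.descFactorial_succ]
  push_cast
  ring

lemma layerWeight_mul_sub_sq (r s : ℕ) (p : ℕ × ℝ) :
    layerWeight r s p * ((p.1 - r : ℕ) * p.2 * ((p.1 - r : ℕ) * p.2)) =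
      layerWeight (r + 2) (s + 2) p + layerWeight (r + 1) (s + 2) p := by
  have hpred := cast_mul_cast_pred (p.1 - r)
  rw [Nat.sub_sub] at hpred
  simp only [layerWeight, Nat.descFactorial_succ]
  push_cast
  linear_combination -(p.1.descFactorial r * p.2 ^ (s + 2) : ℝ) * hpred

lemma layerWeight_mul_binomial_variance (r s : ℕ) (p : ℕ × ℝ) :
    layerWeight r s p * ((p.1 - r : ℕ) * (p.2 - p.2 ^ 2)) =
      layerWeight (r + 1) (s + 1) p - layerWeight (r + 1) (s + 2) p := by
  simp only [layerWeight, Nat.descFactorial_succ]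
  push_cast
  ring

lemma hasCov_mixture_layerWeight [Countable A] {r s : ℕ} {κ : ℕ × ℝ → A → ℝ} {X Y : A → ℝ}
    {c : ℕ × ℝ → ℝ} (hP : ∀ᵐ p ∂P, p.2 ∈ Set.Icc (0 : ℝ) 1)
    (hX : ∀ u, 0 ≤ X u) (hY : ∀ u, 0 ≤ Y u) (hκm : ∀ u, Measurable fun p => κ p u)
    (hκ : ∀ p : ℕ × ℝ, p.2 ∈ Set.Icc (0 : ℝ) 1 →
      HasCov (κ p) X Y ((p.1 - r : ℕ) * p.2) ((p.1 - r : ℕ) * p.2) (c p))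
    (hint₀ : Integrable (layerWeight r s) P)
    (hint₁ : Integrable (layerWeight (r + 1) (s + 1)) P)
    (hint₂ : Integrable (layerWeight (r + 2) (s + 2)) P)
    (hc : Integrable (fun p => layerWeight r s p * c p) P) (hpos : 0 < mom P r s) :
    HasCov (mixture P (layerWeight r s) κ) X Y
      (mom P (r + 1) (s + 1) / mom P r s) (mom P (r + 1) (s + 1) / mom P r s)
      ((∫ p, layerWeight r s p * c p ∂P + mom P (r + 2) (s + 2) + mom P (r + 1) (s + 2)) /
        mom P r s - (mom P (r + 1) (s + 1) / mom P r s) ^ 2) := by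
  have hint₁' : Integrable (layerWeight (r + 1) (s + 2)) P :=
    integrable_layerWeight_of_le hP (Nat.le_succ (s + 1)) hint₁
  have hsecond (p : ℕ × ℝ) : layerWeight r s p *
      (c p + (p.1 - r : ℕ) * p.2 * ((p.1 - r : ℕ) * p.2)) = layerWeight r s p * c p +
        layerWeight (r + 2) (s + 2) p + layerWeight (r + 1) (s + 2) p := by
    rw [mul_add, layerWeight_mul_sub_sq, add_assoc]
  have hint : Integrable (fun p => layerWeight r s p * c p + layerWeight (r + 2) (s + 2) p +
      layerWeight (r + 1) (s + 2) p) P := (hc.add hint₂).add hint₁'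
  have hintegral : ∫ p, layerWeight r s p * c p + layerWeight (r + 2) (s + 2) p +
      layerWeight (r + 1) (s + 2) p ∂P =
        ∫ p, layerWeight r s p * c p ∂P + mom P (r + 2) (s + 2) + mom P (r + 1) (s + 2) := by
    rw [integral_add (f := fun p => layerWeight r s p * c p + layerWeight (r + 2) (s + 2) p)
      (hc.add hint₂) hint₁', integral_add hc hint₂]
    rfl
  have hmix := hasCov_mixture (w := layerWeight r s) hX hY hκm (hP.mono hκ)
    (hP.mono fun p hp => layerWeight_nonneg r s hp.1) hpos hint₀
    (by simpa only [layerWeight_mul_sub] using hint₁)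
    (by simpa only [layerWeight_mul_sub] using hint₁)
    (by simpa only [hsecond] using hint)
  rw [sq]
  simpa only [layerWeight_mul_sub, hsecond, hintegral, ← mom_eq_integral_layerWeight] using hmix

lemma hasCov_mixture_layerWeight_of_binomial [Countable A] {r s : ℕ} {κ : ℕ × ℝ → A → ℝ}
    {X : A → ℝ} (hP : ∀ᵐ p ∂P, p.2 ∈ Set.Icc (0 : ℝ) 1)
    (hX : ∀ u, 0 ≤ X u) (hκm : ∀ u, Measurable fun p => κ p u)
    (hκ : ∀ p : ℕ × ℝ, p.2 ∈ Set.Icc (0 : ℝ) 1 →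
      HasCov (κ p) X X ((p.1 - r : ℕ) * p.2) ((p.1 - r : ℕ) * p.2)
        ((p.1 - r : ℕ) * (p.2 - p.2 ^ 2)))
    (hint₀ : Integrable (layerWeight r s) P)
    (hint₁ : Integrable (layerWeight (r + 1) (s + 1)) P)
    (hint₂ : Integrable (layerWeight (r + 2) (s + 2)) P) (hpos : 0 < mom P r s) :
    HasCov (mixture P (layerWeight r s) κ) X X
      (mom P (r + 1) (s + 1) / mom P r s) (mom P (r + 1) (s + 1) / mom P r s)
      ((mom P (r + 2) (s + 2) + mom P (r + 1) (s + 1)) / mom P r s -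
        (mom P (r + 1) (s + 1) / mom P r s) ^ 2) := by
  have hint₁' : Integrable (layerWeight (r + 1) (s + 2)) P :=
    integrable_layerWeight_of_le hP (Nat.le_succ (s + 1)) hint₁
  have hmix := hasCov_mixture_layerWeight hP hX hX hκm hκ hint₀ hint₁ hint₂
    (by simp only [layerWeight_mul_binomial_variance]; exact hint₁.sub hint₁') hpos
  simp only [layerWeight_mul_binomial_variance] at hmix
  rw [integral_sub hint₁ hint₁', ← mom_eq_integral_layerWeight,
    ← mom_eq_integral_layerWeight] at hmix
  convert hmix using 3
  ring

lemma measurable_binP (k s : ℕ) : Measurable fun p : ℕ × ℝ => binP (p.1 - k) p.2 s :=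
  measurable_from_prod_countable_right fun n => by unfold binP; fun_prop

lemma gInc_eq_mixture :
    gInc P = mixture P (layerWeight 1 0) fun p => binP (p.1 - 1) p.2 := by
  funext s
  simp [gInc, mixture, mom, layerWeight]

lemma f2p_eq_mixture :
    (fun u : ℕ × ℕ => f2p P u.1 u.2) = mixture P (layerWeight 2 1)
      fun p u => binP (p.1 - 2) p.2 u.1 * binP (p.1 - 2) p.2 u.2 := by
  funext u
  simp only [f2p, mixture, mom, layerWeight, pow_one, mul_assoc]

lemma hasMeanVar_gInc (hP : ∀ᵐ p ∂P, p.2 ∈ Set.Icc (0 : ℝ) 1)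
    (hint₁₀ : Integrable (layerWeight 1 0) P) (hint₂₁ : Integrable (layerWeight 2 1) P)
    (hint₃₂ : Integrable (layerWeight 3 2) P) (hpos : 0 < mom P 1 0) :
    HasMeanVar (gInc P) (mom P 2 1 / mom P 1 0)
      ((mom P 3 2 + mom P 2 1) / mom P 1 0 - (mom P 2 1 / mom P 1 0) ^ 2) := by
  rw [gInc_eq_mixture]
  exact hasCov_mixture_layerWeight_of_binomial hP (fun s => s.cast_nonneg)
    (measurable_binP 1) (fun p hp => hasMeanVar_binP _ hp) hint₁₀ hint₂₁ hint₃₂ hpos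

lemma hasMeanVar_barf1 {mu : ℝ} (hmu : 0 ≤ mu) (hP : ∀ᵐ p ∂P, p.2 ∈ Set.Icc (0 : ℝ) 1)
    (hint₁₀ : Integrable (layerWeight 1 0) P) (hint₂₁ : Integrable (layerWeight 2 1) P)
    (hint₃₂ : Integrable (layerWeight 3 2) P) (hpos : 0 < mom P 1 0) :
    HasMeanVar (barf1 mu P) (mu * mom P 2 1) (mu * (mom P 3 2 + mom P 2 1)) := by
  have hmean : mu * mom P 1 0 * (mom P 2 1 / mom P 1 0) = mu * mom P 2 1 := by field_simp
  have hvar : mu * mom P 1 0 * ((mom P 3 2 + mom P 2 1) / mom P 1 0 -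
      (mom P 2 1 / mom P 1 0) ^ 2 + (mom P 2 1 / mom P 1 0) ^ 2) =
        mu * (mom P 3 2 + mom P 2 1) := by
    rw [sub_add_cancel]; field_simp
  have hcpoi : HasMeanVar (barf1 mu P) _ _ :=
    hasMeanVar_cpoi (mul_nonneg hmu hpos.le) (hasMeanVar_gInc hP hint₁₀ hint₂₁ hint₃₂ hpos)
  rwa [hmean, hvar] at hcpoi

end Layers

section Bidegree

variable {mu : ℝ} {P : Measure (ℕ × ℝ)}

lemma measurable_binP_mul_binP (k : ℕ) (u : ℕ × ℕ) :
    Measurable fun p : ℕ × ℝ => binP (p.1 - k) p.2 u.1 * binP (p.1 - k) p.2 u.2 :=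
  (measurable_binP k u.1).mul (measurable_binP k u.2)

lemma hasCov_f2p_self {X : ℕ × ℕ → ℝ} (hX : ∀ u, 0 ≤ X u)
    (hbin : ∀ (n : ℕ), ∀ y ∈ Set.Icc (0 : ℝ) 1,
      HasCov (fun u => binP n y u.1 * binP n y u.2) X X (n * y) (n * y) (n * (y - y ^ 2)))
    (hP : ∀ᵐ p ∂P, p.2 ∈ Set.Icc (0 : ℝ) 1)
    (hint₂₁ : Integrable (layerWeight 2 1) P) (hint₃₂ : Integrable (layerWeight 3 2) P)
    (hint₄₃ : Integrable (layerWeight 4 3) P) (hpos : 0 < mom P 2 1) :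
    HasCov (fun u => f2p P u.1 u.2) X X (mom P 3 2 / mom P 2 1) (mom P 3 2 / mom P 2 1)
      ((mom P 4 3 + mom P 3 2) / mom P 2 1 - (mom P 3 2 / mom P 2 1) ^ 2) := by
  rw [f2p_eq_mixture]
  exact hasCov_mixture_layerWeight_of_binomial hP hX (measurable_binP_mul_binP 2)
    (fun p hp => hbin _ _ hp) hint₂₁ hint₃₂ hint₄₃ hpos

lemma hasCov_f2p (hP : ∀ᵐ p ∂P, p.2 ∈ Set.Icc (0 : ℝ) 1)
    (hint₂₁ : Integrable (layerWeight 2 1) P) (hint₃₂ : Integrable (layerWeight 3 2) P)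
    (hint₄₃ : Integrable (layerWeight 4 3) P) (hpos : 0 < mom P 2 1) :
    HasCov (fun u : ℕ × ℕ => f2p P u.1 u.2) (fun u => (u.1 : ℝ)) (fun u => (u.2 : ℝ))
      (mom P 3 2 / mom P 2 1) (mom P 3 2 / mom P 2 1)
      ((mom P 4 3 + mom P 3 3) / mom P 2 1 - (mom P 3 2 / mom P 2 1) ^ 2) := by
  rw [f2p_eq_mixture]
  simpa only [mul_zero, integral_zero, zero_add] using
    hasCov_mixture_layerWeight (c := fun _ => 0) hP (fun u => u.1.cast_nonneg)
    (fun u => u.2.cast_nonneg) (measurable_binP_mul_binP 2)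
    (fun p hp => (hasMeanVar_binP _ hp).prod_fst_snd (hasMeanVar_binP _ hp))
    hint₂₁ hint₃₂ hint₄₃ (by simp) hpos

lemma delta11_eq_single : (fun u : ℕ × ℕ => delta11 u.1 u.2) = Pi.single (1, 1) 1 := by
  funext u
  simp [delta11, Pi.single_apply, Prod.ext_iff]

lemma hasCov_barf2 {X Y : ℕ × ℕ → ℝ} {a b c a' b' c' : ℝ}
    (hX : ∀ u v, X (u + v) = X u + X v) (hY : ∀ u v, Y (u + v) = Y u + Y v)
    (hbarf1 : HasCov (fun u => barf1 mu P u.1 * barf1 mu P u.2) X Y a b c)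
    (hf2p : HasCov (fun u => f2p P u.1 u.2) X Y a' b' c') :
    HasCov (fun u => barf2 mu P u.1 u.2) X Y (X (1, 1) + a + a') (Y (1, 1) + b + b')
      (c + c') := by
  have hdelta : HasCov (fun u : ℕ × ℕ => delta11 u.1 u.2) X Y (X (1, 1)) (Y (1, 1)) 0 :=
    delta11_eq_single ▸ HasCov.pi_single (1, 1) X Y
  rw [← zero_add c]
  exact hasCov_conv2 hX hY (hasCov_conv2 hX hY hdelta hbarf1) hf2p

lemma pearson_eq_div_sqrt {F : ℕ → ℕ → ℝ} {a b c v w : ℝ}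
    (hcov : HasCov (fun u : ℕ × ℕ => F u.1 u.2) (fun u => (u.1 : ℝ)) (fun u => (u.2 : ℝ)) a b c)
    (hv : HasCov (fun u : ℕ × ℕ => F u.1 u.2) (fun u => (u.1 : ℝ)) (fun u => (u.1 : ℝ)) a a v)
    (hw : HasCov (fun u : ℕ × ℕ => F u.1 u.2) (fun u => (u.2 : ℝ)) (fun u => (u.2 : ℝ)) b b w) :
    pearson F = c / (√v * √w) := by
  simp only [pearson, pmean, sq]
  rw [hcov.hasSum_mul.tsum_eq, hv.hasSum_mul.tsum_eq, hw.hasSum_mul.tsum_eq,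
    hcov.hasSum_left.tsum_eq, hcov.hasSum_right.tsum_eq]
  simp only [add_sub_cancel_right]

theorem limiting_bidegree_correlation_general
    {mu : ℝ} (hmu : 0 ≤ mu)
    {P : Measure (ℕ × ℝ)} (hP : ∀ᵐ p ∂P, p.2 ∈ Set.Icc (0 : ℝ) 1)
    (hint₁₀ : Integrable (layerWeight 1 0) P) (hint₂₁ : Integrable (layerWeight 2 1) P)
    (hint₃₂ : Integrable (layerWeight 3 2) P) (hint₄₃ : Integrable (layerWeight 4 3) P)
    (h₁₀ : 0 < mom P 1 0) (h₂₁ : 0 < mom P 2 1) :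
    pearson (barf2 mu P) =
      (mom P 2 1 * (mom P 4 3 + mom P 3 3) - mom P 3 2 ^ 2) /
        (mom P 2 1 * (mom P 4 3 + mom P 3 2) - mom P 3 2 ^ 2 +
          mu * mom P 2 1 ^ 2 * (mom P 2 1 + mom P 3 2)) := by
  have hbarf1 := hasMeanVar_barf1 hmu hP hint₁₀ hint₂₁ hint₃₂ h₁₀
  have hcov := hasCov_barf2 (by simp) (by simp) (hbarf1.prod_fst_snd hbarf1)
    (hasCov_f2p hP hint₂₁ hint₃₂ hint₄₃ h₂₁)
  have hvar₁ := hasCov_barf2 (by simp) (by simp) (hbarf1.prod_fst_fst hbarf1)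
    (hasCov_f2p_self (fun u => u.1.cast_nonneg)
      (fun n y hy => (hasMeanVar_binP n hy).prod_fst_fst (hasMeanVar_binP n hy))
      hP hint₂₁ hint₃₂ hint₄₃ h₂₁)
  have hvar₂ := hasCov_barf2 (by simp) (by simp) (hbarf1.prod_snd_snd hbarf1)
    (hasCov_f2p_self (fun u => u.2.cast_nonneg)
      (fun n y hy => (hasMeanVar_binP n hy).prod_snd_snd (hasMeanVar_binP n hy))
      hP hint₂₁ hint₃₂ hint₄₃ h₂₁)
  rw [pearson_eq_div_sqrt hcov hvar₁ hvar₂, Real.mul_self_sqrt hvar₁.variance_nonneg,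
    ← mul_div_mul_left _ _ (pow_ne_zero 2 h₂₁.ne')]
  congr 1 <;> field_simp <;> ring

end Bidegree

/-- **Proposition 1** (Bloznelis–Karjalainen–Leskelä). For any `μ ∈ (0,∞)` and any
probability measure `P` on `ℤ₊ × [0,1]` with `0 < P₁₀, P₂₁ < ∞` and `P₃₂, P₄₃ < ∞`, the
random variables `(D₁*, D₂*) = (1 + D₁ + D₁', 1 + D₂ + D₂')` (whose joint law is
`\bar f₂`) satisfy
`Cor(D₁*, D₂*) = [P₂₁(P₄₃+P₃₃) - P₃₂²] / [P₂₁(P₄₃+P₃₂) - P₃₂² + μ P₂₁²(P₂₁+P₃₂)]`. -/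
theorem limiting_bidegree_correlation
    (mu : ℝ) (hmu : 0 < mu)
    (P : Measure (ℕ × ℝ)) [IsProbabilityMeasure P]
    (hPsupp : P {p : ℕ × ℝ | p.2 ∈ Set.Icc (0:ℝ) 1} = 1)
    (hint10 : Integrable (fun p : ℕ × ℝ => (p.1.descFactorial 1 : ℝ) * p.2 ^ (0:ℕ)) P)
    (hint21 : Integrable (fun p : ℕ × ℝ => (p.1.descFactorial 2 : ℝ) * p.2 ^ (1:ℕ)) P)
    (hint32 : Integrable (fun p : ℕ × ℝ => (p.1.descFactorial 3 : ℝ) * p.2 ^ (2:ℕ)) P)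
    (hint43 : Integrable (fun p : ℕ × ℝ => (p.1.descFactorial 4 : ℝ) * p.2 ^ (3:ℕ)) P)
    (h10pos : 0 < mom P 1 0) (h21pos : 0 < mom P 2 1) :
    pearson (barf2 mu P) =
      (mom P 2 1 * (mom P 4 3 + mom P 3 3) - mom P 3 2 ^ 2) /
        (mom P 2 1 * (mom P 4 3 + mom P 3 2) - mom P 3 2 ^ 2 +
          mu * mom P 2 1 ^ 2 * (mom P 2 1 + mom P 3 2)) :=
  limiting_bidegree_correlation_general hmu.le
    ((mem_ae_iff_prob_eq_one₀ (measurable_snd measurableSet_Icc).nullMeasurableSet).2 hPsupp)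
    hint10 hint21 hint32 hint43 h10pos h21pos
end
end

section
/- Let (D'_1, D'_2) be a random vector with distribution f'_2, for a probability measure P on ℤ_+ × [0,1] with 0 < P_{21} < ∞ and P_{32}, P_{33}, P_{43} < ∞. Then E[D'_1] = P_{32}/P_{21}, E[(D'_1)²] = (P_{43} + P_{32})/P_{21}, E[D'_1 D'_2] = (P_{43} + P_{33})/P_{21}, and consequently Cov(D'_1, D'_2) = (P_{43} + P_{33})/P_{21} − (P_{32}/P_{21})² and Var(D'_1) = (P_{43} + P_{32})/P_{21} − (P_{32}/P_{21})². -/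
open MeasureTheory ProbabilityTheory Filter
open scoped ENNReal Topology Classical

noncomputable section

/-! Given `(X, Y) = (x, y)` under the law of density `(x)₂ y / P₂₁`, the variables `D₁'` and `D₂'`
are independent `Bin(x - 2, y)`, whose factorial moments are `(x - 2)ⱼ yʲ`. Integrating their
products gives `E[(D₁')ⱼ (D₂')ₖ] = E[(X)ⱼ₊₂ (X - 2)ₖ Y^(j+k+1)] / P₂₁`, and ordinary moments are
combinations of factorial ones. -/

theorem hasSum_integral_of_ae_hasSum_of_nonneg {ι α : Type*} [Countable ι] [MeasurableSpace α]
    {μ : Measure α} {F : ι → α → ℝ} {f : α → ℝ} (hF : ∀ i, AEStronglyMeasurable (F i) μ)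
    (hF_nonneg : ∀ᵐ a ∂μ, ∀ i, 0 ≤ F i a) (hf : Integrable f μ)
    (hsum : ∀ᵐ a ∂μ, HasSum (F · a) (f a)) :
    HasSum (fun i => ∫ a, F i a ∂μ) (∫ a, f a ∂μ) := by
  refine hasSum_integral_of_dominated_convergence F hF (fun i => ?_) ?_ ?_ hsum
  · filter_upwards [hF_nonneg] with a ha using (Real.norm_of_nonneg (ha i)).le
  · filter_upwards [hsum] with a ha using ha.summable
  · exact hf.congr (hsum.mono fun a ha => ha.tsum_eq.symm)

theorem binP_nonneg {y : ℝ} (hy : y ∈ Set.Icc 0 1) (n s : ℕ) : 0 ≤ binP n y s := by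
  have hy₀ : 0 ≤ y := hy.1
  have hy₁ : 0 ≤ 1 - y := sub_nonneg.2 hy.2
  unfold binP
  positivity

@[fun_prop]
theorem measurable_binP_s16 {α : Type*} [MeasurableSpace α] {X : α → ℕ} {Y : α → ℝ}
    (hX : Measurable X) (hY : Measurable Y) (s : ℕ) : Measurable fun a => binP (X a) (Y a) s := by
  have hbin : Measurable fun p : ℕ × ℝ => binP p.1 p.2 s := by
    refine measurable_from_prod_countable_right fun n => ?_
    unfold binP
    fun_prop
  exact hbin.comp (hX.prodMk hY)

theorem hasSum_binP (n : ℕ) (y : ℝ) : HasSum (binP n y) 1 := by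
  have hsum : ∑ s ∈ Finset.range (n + 1), binP n y s = 1 := by
    calc ∑ s ∈ Finset.range (n + 1), binP n y s = (y + (1 - y)) ^ n := by
          rw [add_pow]
          exact Finset.sum_congr rfl fun s _ => by rw [binP]; ring
      _ = 1 := by rw [add_sub_cancel, one_pow]
  rw [← hsum]
  refine hasSum_sum_of_ne_finset_zero fun s hs => ?_
  have hns : n < s := by simpa using hs
  rw [binP, Nat.choose_eq_zero_of_lt hns, Nat.cast_zero, zero_mul, zero_mul]

theorem descFactorial_mul_binP_add (n j m : ℕ) (y : ℝ) :
    ((m + j).descFactorial j : ℝ) * binP n y (m + j) =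
      n.descFactorial j * y ^ j * binP (n - j) y m := by
  have hchoose : (m + j).descFactorial j * n.choose (m + j) =
      n.descFactorial j * (n - j).choose m := by
    rw [Nat.descFactorial_eq_factorial_mul_choose, Nat.descFactorial_eq_factorial_mul_choose,
      mul_assoc, mul_assoc, mul_comm ((m + j).choose j), Nat.choose_mul (Nat.le_add_left j m),
      Nat.add_sub_cancel]
  have hchoose' : ((m + j).descFactorial j : ℝ) * n.choose (m + j) =
      n.descFactorial j * (n - j).choose m := mod_cast hchoose
  rw [binP, binP, Nat.sub_sub, Nat.add_comm j m]
  linear_combination y ^ (m + j) * (1 - y) ^ (n - (m + j)) * hchoose'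

theorem hasSum_descFactorial_mul_binP (n j : ℕ) (y : ℝ) :
    HasSum (fun s : ℕ => (s.descFactorial j : ℝ) * binP n y s) (n.descFactorial j * y ^ j) := by
  have hvanish : ∀ s ∉ Set.range (· + j), (s.descFactorial j : ℝ) * binP n y s = 0 := by
    intro s hs
    have hsj : s < j := not_le.1 fun hjs => hs ⟨s - j, Nat.sub_add_cancel hjs⟩
    rw [Nat.descFactorial_of_lt hsj, Nat.cast_zero, zero_mul]
  rw [← (add_left_injective j).hasSum_iff hvanish]
  simpa only [Function.comp_def, descFactorial_mul_binP_add, mul_one] using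
    (hasSum_binP (n - j) y).mul_left (n.descFactorial j * y ^ j)

theorem hasSum_descFactorial_mul_descFactorial_mul_binP_mul_binP (n j k : ℕ) (y : ℝ) :
    HasSum
      (fun u : ℕ × ℕ =>
        (u.1.descFactorial j : ℝ) * u.2.descFactorial k * (binP n y u.1 * binP n y u.2))
      (n.descFactorial j * n.descFactorial k * y ^ (j + k)) := by
  have hj := hasSum_descFactorial_mul_binP n j y
  have hk := hasSum_descFactorial_mul_binP n k y
  have hjk := hj.mul hk (summable_mul_of_summable_norm hj.summable.norm hk.summable.norm)
  rw [pow_add, mul_mul_mul_comm]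
  simpa only [mul_mul_mul_comm] using hjk

theorem f2p_comm (P : Measure (ℕ × ℝ)) (s t : ℕ) : f2p P s t = f2p P t s := by
  simp only [f2p, mul_right_comm _ (binP _ _ s)]

theorem hasSum_descFactorial_mul_descFactorial_mul_f2p {P : Measure (ℕ × ℝ)}
    (hP : ∀ᵐ p ∂P, p.2 ∈ Set.Icc (0 : ℝ) 1) (j k : ℕ)
    (hint : Integrable (fun p : ℕ × ℝ =>
      (p.1.descFactorial (j + 2) : ℝ) * (p.1 - 2).descFactorial k * p.2 ^ (j + k + 1)) P) :
    HasSum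
      (fun u : ℕ × ℕ => (u.1.descFactorial j : ℝ) * u.2.descFactorial k * f2p P u.1 u.2)
      ((∫ p, (p.1.descFactorial (j + 2) : ℝ) * (p.1 - 2).descFactorial k * p.2 ^ (j + k + 1) ∂P) /
        mom P 2 1) := by
  let F (u : ℕ × ℕ) (p : ℕ × ℝ) : ℝ := u.1.descFactorial j * u.2.descFactorial k *
    (p.1.descFactorial 2 * p.2 * binP (p.1 - 2) p.2 u.1 * binP (p.1 - 2) p.2 u.2)
  have hF_meas (u : ℕ × ℕ) : Measurable (F u) := by
    have hfact : Measurable fun p : ℕ × ℝ => (p.1.descFactorial 2 : ℝ) :=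
      (measurable_of_countable fun x : ℕ => (x.descFactorial 2 : ℝ)).comp measurable_fst
    fun_prop
  have hF_nonneg : ∀ᵐ p ∂P, ∀ u, 0 ≤ F u p := by
    filter_upwards [hP] with p hp u
    have hy : 0 ≤ p.2 := hp.1
    have hbin₁ := binP_nonneg hp (p.1 - 2) u.1
    have hbin₂ := binP_nonneg hp (p.1 - 2) u.2
    positivity
  have hF_sum (p : ℕ × ℝ) : HasSum (F · p)
      (p.1.descFactorial (j + 2) * (p.1 - 2).descFactorial k * p.2 ^ (j + k + 1)) := by
    have hfact : (p.1.descFactorial (j + 2) : ℝ) =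
        (p.1 - 2).descFactorial j * p.1.descFactorial 2 :=
      mod_cast (Nat.descFactorial_mul_descFactorial (Nat.le_add_left 2 j)).symm
    rw [hfact]
    convert! (hasSum_descFactorial_mul_descFactorial_mul_binP_mul_binP (p.1 - 2) j k p.2).mul_left
      ((p.1.descFactorial 2 : ℝ) * p.2) using 1
    · funext u
      ring
    · ring
  have hsum := hasSum_integral_of_ae_hasSum_of_nonneg
    (fun u => (hF_meas u).aestronglyMeasurable) hF_nonneg hint (.of_forall hF_sum)
  simpa only [F, integral_const_mul, mul_div_assoc, f2p] using hsum.div_const (mom P 2 1)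

theorem hasSum_descFactorial_fst_mul_f2p {P : Measure (ℕ × ℝ)}
    (hP : ∀ᵐ p ∂P, p.2 ∈ Set.Icc (0 : ℝ) 1) (j : ℕ)
    (hint : Integrable (fun p : ℕ × ℝ => (p.1.descFactorial (j + 2) : ℝ) * p.2 ^ (j + 1)) P) :
    HasSum (fun u : ℕ × ℕ => (u.1.descFactorial j : ℝ) * f2p P u.1 u.2)
      (mom P (j + 2) (j + 1) / mom P 2 1) := by
  simpa only [Nat.descFactorial_zero, Nat.cast_one, mul_one, add_zero, mom] using
    hasSum_descFactorial_mul_descFactorial_mul_f2p hP j 0 (by simpa using hint)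

theorem hasSum_fst_mul_snd_mul_f2p {P : Measure (ℕ × ℝ)}
    (hP : ∀ᵐ p ∂P, p.2 ∈ Set.Icc (0 : ℝ) 1)
    (hint33 : Integrable (fun p : ℕ × ℝ => (p.1.descFactorial 3 : ℝ) * p.2 ^ 3) P)
    (hint43 : Integrable (fun p : ℕ × ℝ => (p.1.descFactorial 4 : ℝ) * p.2 ^ 3) P) :
    HasSum (fun u : ℕ × ℕ => (u.1 : ℝ) * u.2 * f2p P u.1 u.2)
      ((mom P 4 3 + mom P 3 3) / mom P 2 1) := by
  have hfact (x : ℕ) : (x.descFactorial 3 : ℝ) * (x - 2 : ℕ) =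
      x.descFactorial 4 + x.descFactorial 3 := by
    rcases lt_or_ge x 3 with hx | hx
    · rw [Nat.descFactorial_of_lt hx, Nat.descFactorial_of_lt (hx.trans (Nat.lt_succ_self 3))]
      simp
    · rw [Nat.descFactorial_succ x 3]
      push_cast [hx, (Nat.le_succ 2).trans hx]
      ring
  have hintegrand (p : ℕ × ℝ) :
      (p.1.descFactorial (1 + 2) : ℝ) * (p.1 - 2).descFactorial 1 * p.2 ^ (1 + 1 + 1) =
        p.1.descFactorial 4 * p.2 ^ 3 + p.1.descFactorial 3 * p.2 ^ 3 := by
    rw [Nat.descFactorial_one, hfact, add_mul]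
  have hsum := hasSum_descFactorial_mul_descFactorial_mul_f2p hP 1 1
    ((hint43.add hint33).congr (.of_forall fun p => (hintegrand p).symm))
  rw [integral_congr_ae (.of_forall hintegrand), integral_add hint43 hint33] at hsum
  simpa only [Nat.descFactorial_one, mom] using hsum

theorem hasSum_fst_sq_mul_f2p {P : Measure (ℕ × ℝ)}
    (hP : ∀ᵐ p ∂P, p.2 ∈ Set.Icc (0 : ℝ) 1)
    (hint32 : Integrable (fun p : ℕ × ℝ => (p.1.descFactorial 3 : ℝ) * p.2 ^ 2) P)
    (hint43 : Integrable (fun p : ℕ × ℝ => (p.1.descFactorial 4 : ℝ) * p.2 ^ 3) P) :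
    HasSum (fun u : ℕ × ℕ => (u.1 : ℝ) ^ 2 * f2p P u.1 u.2)
      ((mom P 4 3 + mom P 3 2) / mom P 2 1) := by
  have hsq (s : ℕ) : (s : ℝ) ^ 2 = s.descFactorial 2 + s.descFactorial 1 := by
    rw [Nat.cast_descFactorial_two, Nat.descFactorial_one]
    ring
  simpa only [hsq, add_mul, add_div] using
    (hasSum_descFactorial_fst_mul_f2p hP 2 hint43).add
      (hasSum_descFactorial_fst_mul_f2p hP 1 hint32)

theorem f2p_moments_general {P : Measure (ℕ × ℝ)}
    (hP : ∀ᵐ p ∂P, p.2 ∈ Set.Icc (0 : ℝ) 1)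
    (hint21 : Integrable (fun p : ℕ × ℝ => (p.1.descFactorial 2 : ℝ) * p.2 ^ 1) P)
    (hint32 : Integrable (fun p : ℕ × ℝ => (p.1.descFactorial 3 : ℝ) * p.2 ^ 2) P)
    (hint33 : Integrable (fun p : ℕ × ℝ => (p.1.descFactorial 3 : ℝ) * p.2 ^ 3) P)
    (hint43 : Integrable (fun p : ℕ × ℝ => (p.1.descFactorial 4 : ℝ) * p.2 ^ 3) P)
    (h21pos : 0 < mom P 2 1) :
    HasSum (fun u : ℕ × ℕ => f2p P u.1 u.2) 1 ∧
    HasSum (fun u : ℕ × ℕ => (u.1 : ℝ) * f2p P u.1 u.2) (mom P 3 2 / mom P 2 1) ∧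
    HasSum (fun u : ℕ × ℕ => (u.2 : ℝ) * f2p P u.1 u.2) (mom P 3 2 / mom P 2 1) ∧
    HasSum (fun u : ℕ × ℕ => (u.1 : ℝ) ^ 2 * f2p P u.1 u.2)
      ((mom P 4 3 + mom P 3 2) / mom P 2 1) ∧
    HasSum (fun u : ℕ × ℕ => (u.1 : ℝ) * u.2 * f2p P u.1 u.2)
      ((mom P 4 3 + mom P 3 3) / mom P 2 1) := by
  have hmass : HasSum (fun u : ℕ × ℕ => f2p P u.1 u.2) 1 := by
    simpa [div_self h21pos.ne'] using hasSum_descFactorial_fst_mul_f2p hP 0 hint21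
  have hfst : HasSum (fun u : ℕ × ℕ => (u.1 : ℝ) * f2p P u.1 u.2) (mom P 3 2 / mom P 2 1) := by
    simpa only [Nat.descFactorial_one] using hasSum_descFactorial_fst_mul_f2p hP 1 hint32
  have hsnd : HasSum (fun u : ℕ × ℕ => (u.2 : ℝ) * f2p P u.1 u.2) (mom P 3 2 / mom P 2 1) := by
    rw [← (Equiv.prodComm ℕ ℕ).hasSum_iff]
    simpa only [Function.comp_def, Equiv.prodComm_apply, Prod.fst_swap, Prod.snd_swap,
      f2p_comm P (Prod.snd _)] using hfst
  exact ⟨hmass, hfst, hsnd, hasSum_fst_sq_mul_f2p hP hint32 hint43,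
    hasSum_fst_mul_snd_mul_f2p hP hint33 hint43⟩

/-- **Moments of `f₂'`** (computations in the proof of Proposition 1 of
Bloznelis–Karjalainen–Leskelä). For `(D₁', D₂') ~ f₂'`:
`E D₁' = P₃₂/P₂₁`, `E (D₁')² = (P₄₃+P₃₂)/P₂₁`, `E D₁'D₂' = (P₄₃+P₃₃)/P₂₁`, and
consequently `Cov(D₁',D₂') = (P₄₃+P₃₃)/P₂₁ - (P₃₂/P₂₁)²` and
`Var(D₁') = (P₄₃+P₃₂)/P₂₁ - (P₃₂/P₂₁)²`. -/
theorem f2p_moments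
    (P : Measure (ℕ × ℝ)) [IsProbabilityMeasure P]
    (hPsupp : P {p : ℕ × ℝ | p.2 ∈ Set.Icc (0:ℝ) 1} = 1)
    (hint21 : Integrable (fun p : ℕ × ℝ => (p.1.descFactorial 2 : ℝ) * p.2 ^ (1:ℕ)) P)
    (hint32 : Integrable (fun p : ℕ × ℝ => (p.1.descFactorial 3 : ℝ) * p.2 ^ (2:ℕ)) P)
    (hint33 : Integrable (fun p : ℕ × ℝ => (p.1.descFactorial 3 : ℝ) * p.2 ^ (3:ℕ)) P)
    (hint43 : Integrable (fun p : ℕ × ℝ => (p.1.descFactorial 4 : ℝ) * p.2 ^ (3:ℕ)) P)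
    (h21pos : 0 < mom P 2 1) :
    (∑' u : ℕ × ℕ, (u.1 : ℝ) * f2p P u.1 u.2) = mom P 3 2 / mom P 2 1 ∧
    (∑' u : ℕ × ℕ, (u.1 : ℝ) ^ 2 * f2p P u.1 u.2) = (mom P 4 3 + mom P 3 2) / mom P 2 1 ∧
    (∑' u : ℕ × ℕ, ((u.1 : ℝ) * u.2) * f2p P u.1 u.2) = (mom P 4 3 + mom P 3 3) / mom P 2 1 ∧
    (∑' u : ℕ × ℕ, ((u.1 : ℝ) * u.2) * f2p P u.1 u.2) -
        (∑' u : ℕ × ℕ, (u.1 : ℝ) * f2p P u.1 u.2) *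
          (∑' u : ℕ × ℕ, (u.2 : ℝ) * f2p P u.1 u.2) =
      (mom P 4 3 + mom P 3 3) / mom P 2 1 - (mom P 3 2 / mom P 2 1) ^ 2 ∧
    (∑' u : ℕ × ℕ, (u.1 : ℝ) ^ 2 * f2p P u.1 u.2) -
        (∑' u : ℕ × ℕ, (u.1 : ℝ) * f2p P u.1 u.2) ^ 2 =
      (mom P 4 3 + mom P 3 2) / mom P 2 1 - (mom P 3 2 / mom P 2 1) ^ 2 := by
  obtain ⟨-, hfst, hsnd, hfst_sq, hfst_snd⟩ := f2p_moments_general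
    ((prob_compl_eq_zero_iff (measurable_snd measurableSet_Icc)).2 hPsupp)
    hint21 hint32 hint33 hint43 h21pos
  simp only [hfst.tsum_eq, hsnd.tsum_eq, hfst_sq.tsum_eq, hfst_snd.tsum_eq, ← sq, and_self]
end
end
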